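/- Let n ≥ 1, m ≥ 1, let D and A be n×n real matrices, let B be an n×m real matrix, and let (λ_i)_{i∈ℕ} be a strictly increasing sequence of positive real numbers tending to +∞ such that rank [λ_i·D − A | B] = n for every i. Then there exists a constant C₅ > 0 such that for every i and every vector a ∈ ℝⁿ one has ‖([λ_i·D − A | B])ᵀ a‖² ≥ C₅ · λ_i^{−2(n−1)²} · ‖a‖². -/

import Mathlib

open Matrix

/-- The Kalman matrix `[M|B] = (M^{n-1}B | M^{n-2}B | ⋯ | MB | B)`. -/
def kalman {n m : ℕ} (M : Matrix (Fin n) (Fin n) ℝ) (B : Matrix (Fin n) (Fin m) ℝ) :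
    Matrix (Fin n) (Fin n × Fin m) ℝ :=
  fun i p => (M ^ (n - 1 - (p.1 : ℕ)) * B) i p.2

/-!
Let `K(t)` be the Kalman matrix of the pencil `tD - A`; its entries are polynomials in `t` of degree
at most `n - 1`. The Gram matrix `G = K Kᵀ` is positive semidefinite, so its determinant is at most
its smallest eigenvalue times `(tr G) ^ (n - 1)`, which gives
`det G(t) * ‖a‖² ≤ (tr G(t)) ^ (n - 1) * ‖K(t)ᵀ a‖²`.
By the rank condition the polynomial `det G` does not vanish at any `λ i`; as `λ i → ∞`, it is
bounded away from zero on the sequence, while `(tr G) ^ (n - 1)` has degree at most `2 (n - 1)²`.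
-/

open Polynomial Filter Bornology
open scoped ComplexOrder MatrixOrder

section DetTrace

theorem prod_le_mul_sum_pow_card_sub_one {ι R : Type*} [Fintype ι] [CommSemiring R]
    [PartialOrder R] [IsOrderedRing R] {f : ι → R} (hf : ∀ i, 0 ≤ f i) (j : ι) :
    ∏ i, f i ≤ f j * (∑ i, f i) ^ (Fintype.card ι - 1) := by
  classical
  calc ∏ i, f i = f j * ∏ i ∈ Finset.univ.erase j, f i :=
        (Finset.mul_prod_erase _ _ (Finset.mem_univ j)).symm
    _ ≤ f j * ∏ _i ∈ Finset.univ.erase j, ∑ k, f k := by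
        gcongr with i
        · exact hf j
        · exact fun i _ => hf i
        · exact Finset.single_le_sum (fun k _ => hf k) (Finset.mem_univ i)
    _ = f j * (∑ i, f i) ^ (Fintype.card ι - 1) := by
        rw [Finset.prod_const, Finset.card_erase_of_mem (Finset.mem_univ j), Finset.card_univ]

variable {ι κ 𝕜 : Type*} [Fintype ι] [DecidableEq ι] [RCLike 𝕜]

theorem det_smul_one_le_trace_pow_smul {A : Matrix ι ι 𝕜} (hA : A.PosSemidef) :
    A.det • (1 : Matrix ι ι 𝕜) ≤ A.trace ^ (Fintype.card ι - 1) • A := by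
  set μ := hA.isHermitian.eigenvalues
  set τ := (∑ i, μ i) ^ (Fintype.card ι - 1)
  have det_eq : A.det = ((∏ i, μ i : ℝ) : 𝕜) := by
    rw [hA.isHermitian.det_eq_prod_eigenvalues, RCLike.ofReal_prod]
  have trace_pow_eq : A.trace ^ (Fintype.card ι - 1) = ((τ : ℝ) : 𝕜) := by
    rw [hA.isHermitian.trace_eq_sum_eigenvalues, RCLike.ofReal_pow, RCLike.ofReal_sum]
  have spectral_bound : ∀ x ∈ spectrum ℝ A, ∏ i, μ i ≤ τ * x := by
    rw [hA.isHermitian.spectrum_real_eq_range_eigenvalues]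
    rintro _ ⟨j, rfl⟩
    rw [mul_comm]
    exact prod_le_mul_sum_pow_card_sub_one hA.eigenvalues_nonneg j
  have hle := algebraMap_le_cfc (τ * ·) _ A spectral_bound (ha := hA.isHermitian)
  rw [cfc_const_mul_id (p := IsSelfAdjoint) τ A hA.isHermitian,
    Algebra.algebraMap_eq_smul_one] at hle
  rwa [det_eq, trace_pow_eq, ← RCLike.real_smul_eq_coe_smul, ← RCLike.real_smul_eq_coe_smul]

variable [Fintype κ]

theorem det_mul_dotProduct_self_le (M : Matrix ι κ ℝ) (a : ι → ℝ) :
    (M * Mᵀ).det * (a ⬝ᵥ a) ≤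
      (M * Mᵀ).trace ^ (Fintype.card ι - 1) * ((Mᵀ *ᵥ a) ⬝ᵥ (Mᵀ *ᵥ a)) := by
  have hG : (M * Mᵀ).PosSemidef := posSemidef_self_mul_conjTranspose M
  have hle := (det_smul_one_le_trace_pow_smul hG).dotProduct_mulVec_nonneg a
  have quadratic_form : a ⬝ᵥ ((M * Mᵀ) *ᵥ a) = (Mᵀ *ᵥ a) ⬝ᵥ (Mᵀ *ᵥ a) := by
    rw [← mulVec_mulVec, dotProduct_mulVec, mulVec_transpose]
  simpa only [star_trivial, sub_mulVec, smul_mulVec, one_mulVec, dotProduct_sub, dotProduct_smul,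
    smul_eq_mul, quadratic_form, sub_nonneg] using hle

theorem det_self_mul_transpose_pos {M : Matrix ι κ ℝ} (hM : M.rank = Fintype.card ι) :
    0 < (M * Mᵀ).det := by
  have rows_independent : LinearIndependent ℝ M.row := by
    rw [linearIndependent_iff_card_eq_finrank_span, ← hM]
    exact M.rank_eq_finrank_span_row
  exact (PosDef.mul_conjTranspose_self M (vecMul_injective_iff.mpr rows_independent)).det_pos

end DetTrace

section NatDegree

variable {ι κ μ R : Type*}

theorem natDegree_matrix_mul_apply_le [Semiring R] [Fintype κ] {P : Matrix ι κ R[X]}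
    {Q : Matrix κ μ R[X]} {d e : ℕ} (hP : ∀ i j, (P i j).natDegree ≤ d)
    (hQ : ∀ i j, (Q i j).natDegree ≤ e) (i : ι) (j : μ) : ((P * Q) i j).natDegree ≤ d + e :=
  natDegree_sum_le_of_forall_le _ _ fun k _ => natDegree_mul_le_of_le (hP i k) (hQ k j)

theorem natDegree_matrix_pow_apply_le [Semiring R] [Fintype ι] [DecidableEq ι]
    {P : Matrix ι ι R[X]} {d : ℕ} (hP : ∀ i j, (P i j).natDegree ≤ d) (k : ℕ) (i j : ι) :
    ((P ^ k) i j).natDegree ≤ k * d := by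
  induction k generalizing i j with
  | zero =>
    rw [pow_zero, one_apply]
    split_ifs <;> simp
  | succ k ih =>
    rw [pow_succ, Nat.succ_mul]
    exact natDegree_matrix_mul_apply_le ih hP i j

theorem natDegree_trace_self_mul_transpose_le [Semiring R] [Fintype ι] [Fintype κ]
    {P : Matrix ι κ R[X]} {d : ℕ} (hP : ∀ i j, (P i j).natDegree ≤ d) :
    (P * Pᵀ).trace.natDegree ≤ 2 * d := by
  rw [two_mul]
  exact natDegree_sum_le_of_forall_le _ _ fun i _ =>
    natDegree_matrix_mul_apply_le hP (fun j k => hP k j) i i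

end NatDegree

theorem exists_norm_eval_le_mul_norm_eval {σ R : Type*} [NormedRing R] [NormMulClass R]
    {p q : R[X]} (hpq : p.natDegree ≤ q.natDegree) {z : σ → R}
    (hz : Tendsto z cofinite (cobounded R)) (hq : ∀ i, q.eval (z i) ≠ 0) :
    ∃ C > 0, ∀ i, ‖p.eval (z i)‖ ≤ C * ‖q.eval (z i)‖ := by
  rcases isEmpty_or_nonempty σ with _ | ⟨⟨i₀⟩⟩
  · exact ⟨1, one_pos, isEmptyElim⟩
  have q_ne_zero : q ≠ 0 := by
    rintro rfl
    exact hq i₀ eval_zero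
  have degree_le : p.degree ≤ q.degree :=
    (degree_le_of_natDegree_le hpq).trans_eq (degree_eq_natDegree q_ne_zero).symm
  obtain ⟨C, C_pos, hC⟩ := Asymptotics.bound_of_isBigO_cofinite
    ((isBigO_cobounded_of_degree_le degree_le).comp_tendsto hz)
  exact ⟨C, C_pos, fun i => hC (hq i)⟩

section PolynomialMatrix

variable {ι κ : Type*} [Fintype κ]

theorem map_self_mul_transpose {R S : Type*} [NonAssocSemiring R] [NonAssocSemiring S]
    (f : R →+* S) (K : Matrix ι κ R) : (K * Kᵀ).map f = K.map f * (K.map f)ᵀ := by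
  rw [Matrix.map_mul, transpose_map]

variable [Fintype ι]

theorem eval_det_self_mul_transpose_pos [DecidableEq ι] {K : Matrix ι κ ℝ[X]} {t : ℝ}
    (hK : (K.map (evalRingHom t)).rank = Fintype.card ι) : 0 < (K * Kᵀ).det.eval t := by
  have h := det_self_mul_transpose_pos hK
  rwa [← map_self_mul_transpose, ← RingHom.mapMatrix_apply, ← RingHom.map_det] at h

theorem eval_det_mul_dotProduct_self_le [DecidableEq ι] (K : Matrix ι κ ℝ[X]) (t : ℝ)
    (a : ι → ℝ) :
    (K * Kᵀ).det.eval t * (a ⬝ᵥ a) ≤ ((K * Kᵀ).trace ^ (Fintype.card ι - 1)).eval t *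
      (((K.map (evalRingHom t))ᵀ *ᵥ a) ⬝ᵥ ((K.map (evalRingHom t))ᵀ *ᵥ a)) := by
  have h := det_mul_dotProduct_self_le (K.map (evalRingHom t)) a
  rwa [← map_self_mul_transpose, ← RingHom.mapMatrix_apply, ← RingHom.map_det,
    RingHom.mapMatrix_apply, ← AddMonoidHom.map_trace, ← map_pow] at h

theorem exists_eval_trace_pow_le_mul_pow {σ : Type*} {K : Matrix ι κ ℝ[X]} {d : ℕ}
    (hd : ∀ i j, (K i j).natDegree ≤ d) {z : σ → ℝ} (hz : Tendsto z cofinite (cobounded ℝ))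
    (hz₀ : ∀ i, z i ≠ 0) (k : ℕ) :
    ∃ C > 0, ∀ i, ((K * Kᵀ).trace ^ k).eval (z i) ≤ C * z i ^ (2 * (k * d)) := by
  set e := 2 * (k * d) with e_def
  have natDegree_le : ((K * Kᵀ).trace ^ k).natDegree ≤ (X ^ e : ℝ[X]).natDegree := by
    rw [natDegree_X_pow, e_def, mul_left_comm]
    exact natDegree_pow_le_of_le _ (natDegree_trace_self_mul_transpose_le hd)
  have eval_X_pow (i : σ) : ‖(X ^ e : ℝ[X]).eval (z i)‖ = z i ^ e := by
    rw [eval_pow, eval_X, Real.norm_of_nonneg ((even_two_mul _).pow_nonneg _)]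
  obtain ⟨C, C_pos, hC⟩ := exists_norm_eval_le_mul_norm_eval natDegree_le hz
    fun i => by simpa only [eval_pow, eval_X] using pow_ne_zero e (hz₀ i)
  exact ⟨C, C_pos, fun i => (le_abs_self _).trans ((hC i).trans_eq (by rw [eval_X_pow]))⟩

theorem exists_mul_dotProduct_self_le_of_rank_eq_card {σ : Type*} {K : Matrix ι κ ℝ[X]} {d : ℕ}
    (hd : ∀ i j, (K i j).natDegree ≤ d) {z : σ → ℝ} (hz : Tendsto z cofinite (cobounded ℝ))
    (hz₀ : ∀ i, z i ≠ 0) (hrank : ∀ i, (K.map (evalRingHom (z i))).rank = Fintype.card ι) :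
    ∃ C > 0, ∀ i (a : ι → ℝ),
      C * (z i ^ (2 * ((Fintype.card ι - 1) * d)))⁻¹ * (a ⬝ᵥ a) ≤
        ((K.map (evalRingHom (z i)))ᵀ *ᵥ a) ⬝ᵥ ((K.map (evalRingHom (z i)))ᵀ *ᵥ a) := by
  classical
  set e := 2 * ((Fintype.card ι - 1) * d)
  set G := K * Kᵀ
  have det_pos (i : σ) : 0 < G.det.eval (z i) := eval_det_self_mul_transpose_pos (hrank i)
  have z_pow_pos (i : σ) : 0 < z i ^ e := (even_two_mul _).pow_pos (hz₀ i)
  obtain ⟨C₁, C₁_pos, one_le_det⟩ : ∃ C > 0, ∀ i, 1 ≤ C * G.det.eval (z i) := by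
    simpa [abs_of_pos (det_pos _)] using exists_norm_eval_le_mul_norm_eval
      (p := 1) (q := G.det) (by simp) hz fun i => (det_pos i).ne'
  obtain ⟨C₂, C₂_pos, trace_pow_le⟩ :=
    exists_eval_trace_pow_le_mul_pow hd hz hz₀ (Fintype.card ι - 1)
  refine ⟨(C₁ * C₂)⁻¹, by positivity, fun i a => ?_⟩
  set w := (K.map (evalRingHom (z i)))ᵀ *ᵥ a
  have hw : 0 ≤ w ⬝ᵥ w := dotProduct_self_star_nonneg w
  have ha : 0 ≤ a ⬝ᵥ a := dotProduct_self_star_nonneg a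
  rw [← mul_inv, inv_mul_le_iff₀ (mul_pos (mul_pos C₁_pos C₂_pos) (z_pow_pos i))]
  calc a ⬝ᵥ a ≤ C₁ * G.det.eval (z i) * (a ⬝ᵥ a) := le_mul_of_one_le_left ha (one_le_det i)
    _ ≤ C₁ * ((G.trace ^ (Fintype.card ι - 1)).eval (z i) * (w ⬝ᵥ w)) := by
        rw [mul_assoc]
        exact mul_le_mul_of_nonneg_left (eval_det_mul_dotProduct_self_le K (z i) a) C₁_pos.le
    _ ≤ C₁ * (C₂ * z i ^ e * (w ⬝ᵥ w)) := by
        gcongr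
        exact trace_pow_le i
    _ = C₁ * C₂ * z i ^ e * (w ⬝ᵥ w) := by ring

end PolynomialMatrix

section KalmanPencil

variable {n m : ℕ} {R : Type*} [CommRing R]

/-- The Kalman matrix `[X D - A | B]` of a matrix pencil, with polynomial entries in the pencil
parameter `X`; evaluating it at `t` gives `[t D - A | B]`. -/
noncomputable def kalmanPencil (D A : Matrix (Fin n) (Fin n) R) (B : Matrix (Fin n) (Fin m) R) :
    Matrix (Fin n) (Fin n × Fin m) R[X] :=
  of fun i p => (((X : R[X]) • D.map C - A.map C) ^ (n - 1 - (p.1 : ℕ)) * B.map C) i p.2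

theorem natDegree_kalmanPencil_apply_le (D A : Matrix (Fin n) (Fin n) R)
    (B : Matrix (Fin n) (Fin m) R) (i : Fin n) (p : Fin n × Fin m) :
    (kalmanPencil D A B i p).natDegree ≤ n - 1 := by
  have natDegree_pencil_le (i j : Fin n) :
      (((X : R[X]) • D.map C - A.map C) i j).natDegree ≤ 1 := by
    simp only [Matrix.sub_apply, Matrix.smul_apply, map_apply, smul_eq_mul]
    compute_degree
  have natDegree_B_le (i : Fin n) (j : Fin m) : (B.map C i j).natDegree ≤ 0 :=
    (natDegree_C (B i j)).le
  calc (kalmanPencil D A B i p).natDegree ≤ (n - 1 - p.1) * 1 + 0 :=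
        natDegree_matrix_mul_apply_le (natDegree_matrix_pow_apply_le natDegree_pencil_le _)
          natDegree_B_le i p.2
    _ ≤ n - 1 := by omega

theorem map_kalmanPencil_evalRingHom (D A : Matrix (Fin n) (Fin n) ℝ)
    (B : Matrix (Fin n) (Fin m) ℝ) (t : ℝ) :
    (kalmanPencil D A B).map (evalRingHom t) = kalman (t • D - A) B := by
  have eval_pencil : ((X : ℝ[X]) • D.map C - A.map C).map (evalRingHom t) = t • D - A := by
    ext i j
    simp [mul_comm t]
  have eval_B : (B.map C).map (evalRingHom t) = B := by
    ext i j
    simp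
  ext i ⟨k, j⟩
  have h := congr_fun₂ (Matrix.map_mul (L := ((X : ℝ[X]) • D.map C - A.map C) ^ (n - 1 - (k : ℕ)))
    (M := B.map C) (f := evalRingHom t)) i j
  rwa [Matrix.map_pow, eval_pencil, eval_B] at h

end KalmanPencil

theorem stmt1_general {n m : ℕ} {σ : Type*} (D A : Matrix (Fin n) (Fin n) ℝ)
    (B : Matrix (Fin n) (Fin m) ℝ) (lam : σ → ℝ) (hne : ∀ i, lam i ≠ 0)
    (htend : Tendsto lam cofinite (cobounded ℝ))
    (hrank : ∀ i, (kalman (lam i • D - A) B).rank = n) :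
    ∃ C₅ > (0 : ℝ), ∀ i, ∀ a : Fin n → ℝ,
      C₅ * (lam i ^ (2 * (n - 1) ^ 2))⁻¹ * ∑ x, (a x) ^ 2 ≤
        ∑ y, ((kalman (lam i • D - A) B)ᵀ.mulVec a y) ^ 2 := by
  have rank_eval_eq (i : σ) : ((kalmanPencil D A B).map (evalRingHom (lam i))).rank =
      Fintype.card (Fin n) := by
    rw [map_kalmanPencil_evalRingHom, hrank, Fintype.card_fin]
  simpa only [map_kalmanPencil_evalRingHom, Fintype.card_fin, dotProduct, ← sq] using
    exists_mul_dotProduct_self_le_of_rank_eq_card (natDegree_kalmanPencil_apply_le D A B) htend hne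
      rank_eval_eq

theorem stmt1 {n m : ℕ} (hn : 1 ≤ n) (hm : 1 ≤ m)
    (D A : Matrix (Fin n) (Fin n) ℝ) (B : Matrix (Fin n) (Fin m) ℝ)
    (lam : ℕ → ℝ) (hpos : ∀ i, 0 < lam i) (hmono : StrictMono lam)
    (htend : Filter.Tendsto lam Filter.atTop Filter.atTop)
    (hrank : ∀ i, (kalman (lam i • D - A) B).rank = n) :
    ∃ C₅ > (0 : ℝ), ∀ i : ℕ, ∀ a : Fin n → ℝ,
      C₅ * (lam i ^ (2 * (n - 1) ^ 2))⁻¹ * ∑ x, (a x) ^ 2 ≤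
        ∑ y, ((kalman (lam i • D - A) B)ᵀ.mulVec a y) ^ 2 :=
  stmt1_general D A B lam (fun i => (hpos i).ne')
    (Nat.cofinite_eq_atTop ▸ htend.mono_right IsOrderBornology.atTop_le_cobounded) hrank
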